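/- arXiv:1212.4590 — 2 statements merged into one kernel-verified Lean document; each statement's English description precedes it below -/
import Mathlib

section
/- Let r be an integer with 1 ≤ r ≤ n and let M be a nonzero finitely generated A-module that is r-pure. Then there exist a finitely generated A-module L of projective dimension at most r and an injective A-linear map M → L. -/
/-!
Let `A = k[x_1, …, x_n]`. The proof is by induction on the codimension `r`.

For `r = 0` a nonzero annihilator of a nonzero element would lower the dimension, so `M` is
torsion-free, hence embeds into a finite free module (`exists_embedding_of_torsionFree`).

For codimension `r + 1` every element of `M` is killed by a nonzero polynomial, so `M` itself is
killed by some `f ≠ 0`. By Nagata's change of coordinates `A ≅ R[X]`, with `R` a polynomial ring in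
`n - 1` variables, in such a way that `f` divides a monic polynomial `g` (`exists_ringEquiv_monic`).
As `R[X]/(g)` is finite free over `R`, the module `M` is finite over `R`; moreover the dimension of
a cyclic submodule is the same over `R` and over `R[X]`, because `R/ann_R(m) → R[X]/ann_{R[X]}(m)`
is injective and integral (`dim_quotient_annihilator_eq`). So `M` is `r`-pure over `R`, and by
induction there is an `R`-embedding `M → L'` with `pd_R L' ≤ r`.

By adjunction `M` embeds `R[X]`-linearly into `L = Hom_R(R[X]/(g), L')` (`exists_coinduced`). Over
`R` the module `L` is a finite direct sum of copies of `L'`, so `pd_R L ≤ r`, and the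
characteristic sequence `0 → L[X] → L[X] → L → 0` yields `pd_{R[X]} L ≤ r + 1` (`pd_polynomial`).
-/

open CategoryTheory

/-- An `A = k[x_1, …, x_n]`-module `M` is `r`-pure if every nonzero element `m ∈ M` generates a
cyclic submodule `A·m` of codimension exactly `r`, i.e. `dim (A / ann_A(A·m)) = n - r`. -/
def IsPureMod (k : Type) [Field k] (n : ℕ) (r : ℕ) (M : Type) [AddCommGroup M]
    [Module (MvPolynomial (Fin n) k) M] : Prop :=
  ∀ m : M, m ≠ 0 →
    ringKrullDim (MvPolynomial (Fin n) k ⧸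
        (Submodule.span (MvPolynomial (Fin n) k) {m}).annihilator)
      = ((n - r : ℕ) : WithBot (WithTop ℕ))

/-! ### Projective dimension -/

/-- `HasProjectiveDimensionLE` is phrased through Yoneda extensions, while `Ext R (ModuleCat R) i` is
the derived functor of `Hom`. A projective resolution of `L` computes both: its cocycles in
degree `i` represent Yoneda classes, these vanish for `i > r`, so every cocycle is a coboundary. -/
theorem ext_subsingleton_of_pd {R : Type} [CommRing R] (L N : ModuleCat.{0} R) (r i : ℕ)
    [HasProjectiveDimensionLE L r] (hi : r < i) :
    Subsingleton (((Ext R (ModuleCat R) i).obj (Opposite.op L)).obj N) := by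
  let P := projectiveResolution L
  obtain ⟨p, rfl⟩ : ∃ p, i = p + 1 := ⟨i - 1, by omega⟩
  have hz : Limits.IsZero (((Ext R (ModuleCat R) (p + 1)).obj (Opposite.op L)).obj N) := by
    refine Limits.IsZero.of_iso ?_ (P.isoExt (p + 1) N)
    rw [← HomologicalComplex.exactAt_iff_isZero_homology,
      HomologicalComplex.exactAt_iff' _ p (p + 1) (p + 2) (by simp) (by simp),
      ShortComplex.moduleCat_exact_iff]
    intro (f : P.complex.X (p + 1) ⟶ N) hf
    have hf' : P.complex.d (p + 2) (p + 1) ≫ f = 0 := hf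
    have h0 := (P.extMk f (p + 2) rfl hf').eq_zero_of_hasProjectiveDimensionLT (r + 1) (by omega)
    obtain ⟨g, hg⟩ := (P.extMk_eq_zero_iff f (p + 2) rfl hf' p rfl).1 h0
    exact ⟨g, hg⟩
  exact ModuleCat.subsingleton_of_isZero hz

theorem pd_zero_iff {R : Type} [CommRing R] (N : Type) [AddCommGroup N] [Module R N] :
    HasProjectiveDimensionLE (ModuleCat.of R N) 0 ↔ Module.Projective R N := by
  rw [← projective_iff_hasProjectiveDimensionLE_zero]
  exact (IsProjective.iff_projective N).symm

/-- Dimension shifting along a surjection from a projective module. -/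
theorem pd_succ_iff {R : Type} [CommRing R] {P N : Type} [AddCommGroup N] [Module R N]
    [AddCommGroup P] [Module R P] [Module.Projective R P] (f : P →ₗ[R] N)
    (hf : Function.Surjective f) (d : ℕ) :
    HasProjectiveDimensionLE (ModuleCat.of R N) (d + 1) ↔
      HasProjectiveDimensionLE (ModuleCat.of R (LinearMap.ker f)) d :=
  (LinearMap.shortExact_shortComplexKer hf).hasProjectiveDimensionLT_X₃_iff d
    ((IsProjective.iff_projective P).1 inferInstance)

theorem pd_pi {R : Type} [CommRing R] (N : Type) [AddCommGroup N] [Module R N] (r d : ℕ)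
    [HasProjectiveDimensionLE (ModuleCat.of R N) r] :
    HasProjectiveDimensionLE (ModuleCat.of R (Fin d → N)) r := by
  induction d with
  | zero =>
    have : Limits.IsZero (ModuleCat.of R (Fin 0 → N)) := ModuleCat.isZero_of_subsingleton _
    have := this.hasProjectiveDimensionLT_zero
    exact hasProjectiveDimensionLT_of_ge _ 0 _ (Nat.zero_le _)
  | succ d ih =>
    have : HasProjectiveDimensionLT (ModuleCat.of R N ⊞ ModuleCat.of R (Fin d → N)) (r + 1) :=
      inferInstance
    exact hasProjectiveDimensionLT_of_iso
      (ModuleCat.biprodIsoProd (ModuleCat.of R N) (ModuleCat.of R (Fin d → N)) ≪≫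
      (Fin.consLinearEquiv R (fun _ : Fin (d + 1) => N)).toModuleIso) (r + 1)

open Polynomial in
/-- The characteristic sequence `0 → N[X] → N[X] → N → 0` of an `R[X]`-module `N`, whose first map is
`φ = X - x` with `x` the action of `X` on the coefficients, and whose second map `ψ` evaluates a
polynomial at `x`. -/
theorem exists_poly_resolution {R : Type} [CommRing R] (N : Type) [AddCommGroup N] [Module R N]
    [Module R[X] N] [IsScalarTower R R[X] N] :
    ∃ (ψ : PolynomialModule R N →ₗ[R[X]] N), Function.Surjective ψ ∧
      Nonempty (PolynomialModule R N ≃ₗ[R[X]] LinearMap.ker ψ) := by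
  let x : N →ₗ[R] N := Algebra.lsmul R R N (X : R[X])
  let e := PolynomialModule.polynomialTensorProductLEquivPolynomialModule R N
  let ψ : PolynomialModule R N →ₗ[R[X]] N :=
    ((LinearMap.id (R := R) (M := N)).liftBaseChange R[X]) ∘ₗ e.symm.toLinearMap
  have hψ : ∀ i n, ψ (PolynomialModule.single R i n) = (X ^ i : R[X]) • n := by
    intro i n
    have : PolynomialModule.single R i n = e ((X ^ i : R[X]) ⊗ₜ[R] n) := by
      simp [e, PolynomialModule.polynomialTensorProductLEquivPolynomialModule,
        ← monomial_one_right_eq_X_pow]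
      rfl
    rw [this]; simp [ψ]
  let φ : PolynomialModule R N →ₗ[R[X]] PolynomialModule R N :=
    { toFun := fun q => (X : R[X]) • q - PolynomialModule.map R x q
      map_add' := fun p q => by simp only [smul_add, map_add]; abel
      map_smul' := fun p q => by
        rw [PolynomialModule.map_smul, Algebra.algebraMap_self, Polynomial.map_id, smul_comm,
          RingHom.id_apply, smul_sub] }
  have hφ : ∀ q, φ q = (X : R[X]) • q - PolynomialModule.map R x q := fun _ => rfl
  have hX : ∀ (i : ℕ) (n : N), (X : R[X]) • PolynomialModule.single R i n
      = PolynomialModule.single R (i + 1) n := by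
    intro i n
    rw [← monomial_one_one_eq_X, PolynomialModule.monomial_smul_single, one_smul, add_comm]
  have hφs : ∀ (i : ℕ) (n : N), φ (PolynomialModule.single R i n) = PolynomialModule.single R (i + 1) n
      - PolynomialModule.single R i ((X : R[X]) • n) := by
    intro i n
    rw [hφ, hX, PolynomialModule.map_single]; rfl
  -- Comparing coefficients in `φ q = 0` gives `q_i = X q_{i+1} = X² q_{i+2} = ⋯`, which is
  -- eventually `0`; hence `φ` is injective.
  have hc : ∀ (q : PolynomialModule R N) i,
      (φ q).coeff (i + 1) = q.coeff i - (X : R[X]) • q.coeff (i + 1) := by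
    intro q i
    induction q using PolynomialModule.induction_linear with
    | zero => simp
    | add p q hp hq =>
      rw [φ.map_add]; simp only [PolynomialModule.coeff_add, Finsupp.add_apply, hp, hq, smul_add]
      abel
    | single j n =>
      rw [hφs, sub_eq_add_neg, PolynomialModule.coeff_add, Finsupp.add_apply, sub_eq_add_neg]
      have : ∀ p : PolynomialModule R N, (-p).coeff (i+1) = - (p.coeff (i+1)) := fun p => rfl
      rw [this]
      simp only [PolynomialModule.coeff_single, Finsupp.single_apply]
      split_ifs <;> simp_all
  have hinj : Function.Injective φ := by
    rw [← LinearMap.ker_eq_bot, LinearMap.ker_eq_bot']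
    intro q hq
    have h1 : ∀ i, q.coeff i = (X : R[X]) • q.coeff (i + 1) := fun i => by
      have := hc q i
      rw [hq] at this
      exact (sub_eq_zero.1 this.symm)
    have h2 : ∀ j i, q.coeff i = (X ^ j : R[X]) • q.coeff (i + j) := by
      intro j
      induction j with
      | zero => simp
      | succ j ih => intro i; rw [ih i, h1 (i + j), smul_smul, ← pow_succ, add_assoc]
    apply PolynomialModule.coeff_eq_zero.1
    ext i
    -- `B` bounds the degree of `q`.
    obtain ⟨B, hB⟩ := q.coeff.support.bddAbove
    have : q.coeff (i + (B + 1)) = 0 := by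
      by_contra h
      have := hB (Finsupp.mem_support_iff.2 h)
      omega
    rw [h2 (B + 1) i, this, smul_zero]; rfl
  -- Modulo the range of `φ`, every `q` is congruent to the constant `ψ q`.
  have hmod : ∀ q, q - PolynomialModule.single R 0 (ψ q) ∈ LinearMap.range φ := by
    have hs : ∀ (i : ℕ) (n : N), PolynomialModule.single R i n
        - PolynomialModule.single R 0 ((X ^ i : R[X]) • n) ∈ LinearMap.range φ := by
      intro i
      induction i with
      | zero => intro n; simp
      | succ i ih =>
        intro n
        have := add_mem (LinearMap.mem_range_self φ (PolynomialModule.single R i n))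
          (ih ((X : R[X]) • n))
        rwa [hφs, smul_smul, ← pow_succ, sub_add_sub_cancel] at this
    intro q
    induction q using PolynomialModule.induction_linear with
    | zero => simp
    | add p q hp hq =>
      have := add_mem hp hq
      rw [map_add, PolynomialModule.single_add]
      convert this using 1; abel
    | single j n => rw [hψ]; exact hs j n
  have hr : LinearMap.range φ = LinearMap.ker ψ := by
    apply le_antisymm
    · rintro _ ⟨q, rfl⟩
      rw [LinearMap.mem_ker]
      induction q using PolynomialModule.induction_linear with
      | zero => simp
      | add p q hp hq => rw [map_add, map_add, hp, hq, add_zero]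
      | single j n => rw [hφs, map_sub, hψ, hψ, smul_smul, ← pow_succ, sub_self]
    · intro q hq
      have := hmod q
      rw [LinearMap.mem_ker.1 hq] at this
      simpa using this
  exact ⟨ψ, fun n => ⟨PolynomialModule.single R 0 n, by simp [hψ]⟩,
    ⟨(LinearEquiv.ofInjective φ hinj).trans (LinearEquiv.ofEq _ _ hr)⟩⟩

open Polynomial in
/-- `pd_{R[X]} N ≤ pd_R N + 1`. For projective `N` this is the characteristic sequence; dimension
shifting along a free `R[X]`-module, which is also free over `R`, gives the general case. -/
theorem pd_polynomial {R : Type} [CommRing R] (d : ℕ) : ∀ (N : Type) [AddCommGroup N] [Module R N]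
    [Module R[X] N] [IsScalarTower R R[X] N], HasProjectiveDimensionLE (ModuleCat.of R N) d →
    HasProjectiveDimensionLE (ModuleCat.of R[X] N) (d + 1) := by
  induction d with
  | zero =>
    intro N _ _ _ _ h
    rw [pd_zero_iff] at h
    obtain ⟨ψ, hψ, ⟨e⟩⟩ := exists_poly_resolution (R := R) N
    have : Module.Projective R[X] (PolynomialModule R N) :=
      Module.Projective.of_equiv
        (PolynomialModule.polynomialTensorProductLEquivPolynomialModule R N)
    rw [pd_succ_iff ψ hψ, pd_zero_iff]
    exact Module.Projective.of_equiv e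
  | succ d ih =>
    intro N _ _ _ _ h
    let f : (N →₀ R[X]) →ₗ[R[X]] N := Finsupp.linearCombination R[X] id
    have hf : Function.Surjective f := Finsupp.linearCombination_id_surjective _ _
    rw [pd_succ_iff f hf]
    have : IsScalarTower R R[X] (LinearMap.ker f) :=
      ⟨fun a p x => Subtype.ext (smul_assoc a p x.1)⟩
    exact ih (LinearMap.ker f) ((pd_succ_iff (f.restrictScalars R) hf d).1 h)

open Polynomial in
theorem exists_linear_of_commute_X {R : Type} [CommRing R] {M L : Type} [AddCommGroup M]
    [AddCommGroup L] [Module R M] [Module R[X] M] [IsScalarTower R R[X] M]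
    [Module R L] [Module R[X] L] [IsScalarTower R R[X] L]
    (f : M →ₗ[R] L) (h : ∀ m, f ((X : R[X]) • m) = (X : R[X]) • f m) :
    ∃ F : M →ₗ[R[X]] L, ∀ m, F m = f m := by
  refine ⟨{ toFun := f, map_add' := map_add f, map_smul' := fun p m => ?_ }, fun _ => rfl⟩
  have hC : ∀ (a : R) (m : M), f (C a • m) = C a • f m := fun a m => by
    rw [← algebraMap_eq, algebraMap_smul, algebraMap_smul, map_smul]
  have hXn : ∀ (n : ℕ) (m : M), f ((X ^ n : R[X]) • m) = (X ^ n : R[X]) • f m := fun n => by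
    induction n with
    | zero => simp
    | succ n ih => intro m; rw [pow_succ', mul_smul, h, ih, smul_smul]
  induction p using Polynomial.induction_on' with
  | add p q hp hq => simp only [add_smul, map_add] at *; rw [hp, hq]
  | monomial n a => rw [← C_mul_X_pow_eq_monomial, mul_smul, hC, hXn, RingHom.id_apply, mul_smul]

open Polynomial in
/-- If a monic `g` kills `M`, an `R`-embedding `ι : M → L'` extends to an `R[X]`-embedding of `M` into
the coinduced module `Hom_R(R[X]/(g), L')`. The latter is modelled on `Fin d → L'`, where
`d = deg g`, by recording the values of a homomorphism at `1, X, …, X^(d-1)`; then `X` acts by the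
companion matrix `a` of `g`, and `m` goes to `j ↦ ι (X^j • m)`. -/
theorem exists_coinduced {R : Type} [CommRing R] {M L' : Type} [AddCommGroup M] [AddCommGroup L']
    [Module R M] [Module R[X] M] [IsScalarTower R R[X] M] [Module R L'] [Module.Finite R L']
    (g : R[X]) (hg : g.Monic) (hgM : ∀ m : M, g • m = 0) (ι : M →ₗ[R] L')
    (hι : Function.Injective ι) (r : ℕ) (hL' : HasProjectiveDimensionLE (ModuleCat.of R L') r) :
    ∃ (L : Type) (_ : AddCommGroup L) (_ : Module R[X] L), Module.Finite R[X] L ∧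
      HasProjectiveDimensionLE (ModuleCat.of R[X] L) (r + 1) ∧
      ∃ f : M →ₗ[R[X]] L, Function.Injective f := by
  let d := g.natDegree
  let a : Module.End R (Fin d → L') := LinearMap.pi fun j =>
    if h : j.1 + 1 < d then LinearMap.proj ⟨j.1 + 1, h⟩
    else - ∑ i : Fin d, g.coeff i • LinearMap.proj i
  let f : M →ₗ[R] (Fin d → L') :=
    LinearMap.pi fun j => ι ∘ₗ Algebra.lsmul R R M (X ^ j.1 : R[X])
  have hf : ∀ m j, f m j = ι ((X ^ j.1 : R[X]) • m) := fun _ _ => rfl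
  have hcomm : ∀ m, f ((X : R[X]) • m) = a (f m) := by
    intro m
    ext j
    rw [hf, smul_smul, ← pow_succ]
    simp only [a, LinearMap.pi_apply]
    split_ifs with h
    · rfl
    · have hj : j.1 + 1 = d := by have := j.2; omega
      have h0 := hgM m
      rw [hg.as_sum, add_smul, Finset.sum_smul] at h0
      have h1 : (X ^ d : R[X]) • m = - ∑ i ∈ Finset.range d, (C (g.coeff i) * X ^ i) • m :=
        eq_neg_of_add_eq_zero_left h0
      rw [hj, h1, map_neg, map_sum, Finset.sum_range, LinearMap.neg_apply, LinearMap.sum_apply]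
      congr 1
      refine Finset.sum_congr rfl fun i _ => ?_
      rw [LinearMap.smul_apply, LinearMap.proj_apply, hf, mul_smul, ← algebraMap_eq,
        algebraMap_smul, map_smul]
  have h0 : HasProjectiveDimensionLE (ModuleCat.of R (Module.AEval' a)) r :=
    have := pd_pi L' (R := R) r d
    hasProjectiveDimensionLT_of_iso (Module.AEval'.of a).toModuleIso (r + 1)
  obtain ⟨F, hF⟩ := exists_linear_of_commute_X ((Module.AEval'.of a).toLinearMap ∘ₗ f) fun m => by
    simp only [LinearMap.comp_apply, LinearEquiv.coe_coe, hcomm, Module.AEval'.X_smul_of]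
  refine ⟨Module.AEval' a, inferInstance, inferInstance, inferInstance, pd_polynomial r _ h0, F, ?_⟩
  rw [← LinearMap.ker_eq_bot, LinearMap.ker_eq_bot']
  intro m hm
  rw [hF, LinearMap.comp_apply, LinearEquiv.coe_coe, LinearEquiv.map_eq_zero_iff] at hm
  rcases Nat.eq_zero_or_pos d with hd | hd
  -- A monic `g` of degree `0` is `1`, and then `M = 0`.
  · rw [← one_smul R[X] m, ← hg.natDegree_eq_zero.1 hd]
    exact hgM m
  · have h1 := congrFun hm ⟨0, hd⟩
    rw [hf, pow_zero, one_smul] at h1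
    exact hι (h1.trans (map_zero ι).symm)

/-! ### Torsion-free modules and integral extensions -/

/-- A finitely generated torsion-free module over a domain embeds into a finite free module: some
nonzero `a` multiplies it into the free submodule spanned by a maximal linearly independent subset
of the generators. -/
theorem exists_embedding_of_torsionFree {A M : Type} [CommRing A] [IsDomain A] [AddCommGroup M]
    [Module A M] [Module.Finite A M] (h : ∀ (a : A) (m : M), a • m = 0 → a = 0 ∨ m = 0) :
    ∃ (s : Type) (_ : Finite s) (f : M →ₗ[A] (s →₀ A)), Function.Injective f := by
  obtain ⟨n, v, hv⟩ := Module.Finite.exists_fin (R := A) (M := M)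
  obtain ⟨I, hI, hmax⟩ := exists_maximal_linearIndepOn A v
  have : ∀ i, ∃ a : A, a ≠ 0 ∧ a • v i ∈ Submodule.span A (v '' I) := fun i => by
    by_cases hi : i ∈ I
    · exact ⟨1, one_ne_zero, by
        rw [one_smul]; exact Submodule.subset_span (Set.mem_image_of_mem v hi)⟩
    · exact hmax i hi
  choose a ha hav using this
  have hb : ∀ m : M, (∏ i, a i) • m ∈ Submodule.span A (Set.range fun i : I => v i) := by
    intro m
    rw [← Set.image_eq_range]
    have hm : m ∈ Submodule.span A (Set.range v) := hv ▸ Submodule.mem_top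
    induction hm using Submodule.span_induction with
    | mem x hx =>
      obtain ⟨i, rfl⟩ := hx
      rw [← Finset.prod_erase_mul _ _ (Finset.mem_univ i), mul_smul]
      exact Submodule.smul_mem _ _ (hav i)
    | zero => simp
    | add x y _ _ hx hy => rw [smul_add]; exact add_mem hx hy
    | smul c x _ hx => rw [smul_comm]; exact Submodule.smul_mem _ _ hx
  refine ⟨I, inferInstance, (hI.repr : _ →ₗ[A] _) ∘ₗ
    ((LinearMap.lsmul A M (∏ i, a i)).codRestrict _ hb), ?_⟩
  refine (LinearMap.ker_eq_bot.1 hI.repr_ker).comp ?_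
  rw [← LinearMap.ker_eq_bot, LinearMap.ker_eq_bot']
  intro m hm
  exact (h _ m (congrArg Subtype.val hm)).resolve_left (Finset.prod_ne_zero_iff.2 fun i _ => ha i)

/-- Krull dimension is invariant under injective integral extensions: `≤` is lying over together with
going up, `≥` is incomparability. -/
theorem dim_eq_of_integral (R S : Type) [CommRing R] [CommRing S] [Algebra R S]
    [Algebra.IsIntegral R S] [FaithfulSMul R S] : ringKrullDim R = ringKrullDim S := by
  apply le_antisymm
  · refine iSup_le fun l => ?_
    obtain ⟨P, hP, hlo⟩ := Ideal.exists_ideal_over_prime_of_isIntegral (S := S) l.head.asIdeal ⊥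
      (by rw [← RingHom.ker_eq_comap_bot, (RingHom.injective_iff_ker_eq_bot _).1 
        (FaithfulSMul.algebraMap_injective R S)]; exact bot_le)
    have : P.LiesOver l.head.asIdeal := ⟨hlo.2.symm⟩
    have := hlo.1
    obtain ⟨L, hL, -⟩ := Ideal.exists_ltSeries_of_hasGoingUp l P
    rw [← hL]
    exact le_iSup (fun p : LTSeries (PrimeSpectrum S) => (p.length : WithBot ℕ∞)) L
  · exact Order.krullDim_le_of_strictMono (PrimeSpectrum.comap (algebraMap R S))
      fun I J h => Ideal.IsIntegral.comap_lt_comap h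

/-! ### Nagata's change of coordinates -/

section Nagata

open Polynomial MvPolynomial Ideal Nat RingHom List

variable {k : Type*} [Field k] {n : ℕ} (f : MvPolynomial (Fin (n + 1)) k)
variable (v w : Fin (n + 1) →₀ ℕ)

variable {f v} in
lemma forall_mem_ofFn_lt (vlt : ∀ i, v i < 2 + f.totalDegree) :
    ∀ l ∈ ofFn v, l < 2 + f.totalDegree := by
  grind

/-- The `k`-algebra endomorphism that fixes `X_0` and maps `X_i` to `X_i + c • X_0 ^ (N ^ i)` for
`i ≠ 0`, where `N = 2 + f.totalDegree`; any `N` larger than all exponents in `f` would do. -/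
noncomputable abbrev nagataHom (c : k) :
    MvPolynomial (Fin (n + 1)) k →ₐ[k] MvPolynomial (Fin (n + 1)) k :=
  aeval fun i ↦ if i = 0 then X 0 else X i + c • X 0 ^ (2 + f.totalDegree) ^ i.1

lemma nagataHom_comp_neg (c : k) : (nagataHom f c).comp (nagataHom f (-c)) = AlgHom.id _ _ := by
  rw [comp_aeval, ← MvPolynomial.aeval_X_left]
  ext i v
  cases i using Fin.cases <;> simp

/-- The Nagata change of coordinates `nagataHom f 1`, with inverse `nagataHom f (-1)`. -/
noncomputable abbrev nagataEquiv := AlgEquiv.ofAlgHom (nagataHom f 1) (nagataHom f (-1))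
  (nagataHom_comp_neg f 1) (by simpa using nagataHom_comp_neg f (-1))

/-- Digit expansions in base `2 + f.totalDegree` are unique. -/
lemma sum_pow_mul_ne (vlt : ∀ i, v i < 2 + f.totalDegree)
    (wlt : ∀ i, w i < 2 + f.totalDegree) (ne : v ≠ w) :
    ∑ x : Fin (n + 1), (2 + f.totalDegree) ^ x.1 * v x ≠
      ∑ x : Fin (n + 1), (2 + f.totalDegree) ^ x.1 * w x := by
  intro h
  refine ne <| Finsupp.ext <| congrFun <| ofFn_inj.mp ?_
  apply ofDigits_inj_of_len_eq (Nat.lt_add_right f.totalDegree one_lt_two)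
    (by simp) (forall_mem_ofFn_lt vlt) (forall_mem_ofFn_lt wlt)
  simpa only [ofDigits_eq_sum_mapIdx, mapIdx_eq_ofFn, get_ofFn, length_ofFn,
    Fin.val_cast, mul_comm, sum_ofFn] using! h

lemma degreeOf_zero_nagataEquiv_monomial {a : k} (ha : a ≠ 0) :
    ((nagataEquiv f) (monomial v a)).degreeOf 0 =
    ∑ i : Fin (n + 1), ((2 + f.totalDegree) ^ i.1) * v i := by
  rw [← natDegree_finSuccEquiv, monomial_eq, Finsupp.prod_pow v fun a ↦ X a]
  simp only [Fin.prod_univ_succ, Fin.sum_univ_succ, map_mul, map_prod, map_pow,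
    AlgEquiv.ofAlgHom_apply, MvPolynomial.aeval_C, MvPolynomial.aeval_X, if_pos, Fin.succ_ne_zero,
    ite_false, one_smul, map_add, finSuccEquiv_X_zero, finSuccEquiv_X_succ, algebraMap_eq]
  have h (i : Fin n) :
      (Polynomial.C (X (R := k) i) + Polynomial.X ^ (2 + f.totalDegree) ^ i.succ.1) ^
        v i.succ ≠ 0 :=
    pow_ne_zero (v i.succ) (leadingCoeff_ne_zero.mp <| by simp [add_comm, leadingCoeff_X_pow_add_C])
  rw [natDegree_mul (by simp [ha]) (mul_ne_zero (by simp) (Finset.prod_ne_zero_iff.mpr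
    (fun i _ ↦ h i))), natDegree_mul (by simp) (Finset.prod_ne_zero_iff.mpr (fun i _ ↦ h i)),
    natDegree_prod _ _ (fun i _ ↦ h i), natDegree_finSuccEquiv, degreeOf_C]
  simpa only [natDegree_pow, zero_add, natDegree_X, mul_one, Fin.val_zero, pow_zero, one_mul,
    add_right_inj] using Finset.sum_congr rfl (fun i _ ↦ by
    rw [add_comm (Polynomial.C _), natDegree_X_pow_add_C, mul_comm])

/-- Distinct monomials of `f` acquire distinct degrees in `X_0` under the change of coordinates. -/
lemma degreeOf_nagataEquiv_ne_of_ne (hv : v ∈ f.support) (hw : w ∈ f.support) (ne : v ≠ w) :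
    (nagataEquiv f <| monomial v <| coeff v f).degreeOf 0 ≠
    (nagataEquiv f <| monomial w <| coeff w f).degreeOf 0 := by
  rw [degreeOf_zero_nagataEquiv_monomial _ _ <| mem_support_iff.mp hv,
    degreeOf_zero_nagataEquiv_monomial _ _ <| mem_support_iff.mp hw]
  refine sum_pow_mul_ne f v w (fun i ↦ ?_) (fun i ↦ ?_) ne <;>
  exact lt_of_le_of_lt ((monomial_le_degreeOf i ‹_›).trans (degreeOf_le_totalDegree f i))
    (by lia)

lemma leadingCoeff_finSuccEquiv_nagataEquiv_monomial :
    (finSuccEquiv k n ((nagataEquiv f) ((monomial v) (coeff v f)))).leadingCoeff =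
    algebraMap k _ (coeff v f) := by
  rw [monomial_eq, Finsupp.prod_fintype]
  · simp only [map_mul, map_prod, leadingCoeff_mul, leadingCoeff_prod]
    rw [AlgEquiv.ofAlgHom_apply, algHom_C, algebraMap_eq, finSuccEquiv_apply,
      eval₂Hom_C, coe_comp]
    simp only [AlgEquiv.ofAlgHom_apply, Function.comp_apply, leadingCoeff_C, map_pow,
      leadingCoeff_pow, algebraMap_eq]
    have : ∀ j, ((finSuccEquiv k n) ((nagataHom f) 1 (X j))).leadingCoeff = 1 := fun j ↦ by
      by_cases h : j = 0
      · simp [h, finSuccEquiv_apply]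
      · simp only [aeval_eq_bind₁, bind₁_X_right, if_neg h, one_smul, map_add, map_pow]
        obtain ⟨i, rfl⟩ := Fin.exists_succ_eq.mpr h
        simp [finSuccEquiv_X_succ, finSuccEquiv_X_zero, add_comm]
    simp only [this, one_pow, Finset.prod_const_one, mul_one]
  exact fun i ↦ pow_zero _

/-- After the Nagata change of coordinates, `f ≠ 0` has unit leading coefficient in `X_0`. -/
lemma isUnit_leadingCoeff_nagataEquiv (fne : f ≠ 0) :
    IsUnit (finSuccEquiv k n (nagataEquiv f f)).leadingCoeff := by
  obtain ⟨v, vin, vs⟩ := Finset.exists_max_image f.support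
    (fun v ↦ (nagataEquiv f ((monomial v) (coeff v f))).degreeOf 0) (support_nonempty.mpr fne)
  set h := fun w ↦ (MvPolynomial.monomial w) (coeff w f)
  simp only [← natDegree_finSuccEquiv] at vs
  replace vs : ∀ x ∈ f.support \ {v}, (finSuccEquiv k n ((nagataEquiv f) (h x))).degree <
      (finSuccEquiv k n ((nagataEquiv f) (h v))).degree := by
    intro x hx
    obtain ⟨h1, h2⟩ := Finset.mem_sdiff.mp hx
    apply degree_lt_degree <| lt_of_le_of_ne (vs x h1) ?_
    simpa only [natDegree_finSuccEquiv]
      using degreeOf_nagataEquiv_ne_of_ne f _ _ h1 vin <| ne_of_not_mem_cons h2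
  have coeff : (finSuccEquiv k n ((nagataEquiv f) (h v + ∑ x ∈ f.support \ {v}, h x))).leadingCoeff =
      (finSuccEquiv k n ((nagataEquiv f) (h v))).leadingCoeff := by
    simp only [map_add, map_sum]
    rw [add_comm]
    apply leadingCoeff_add_of_degree_lt <| (lt_of_le_of_lt <| degree_sum_le _ _) ?_
    have h2 : h v ≠ 0 := by simpa [h] using mem_support_iff.mp vin
    replace h2 : (finSuccEquiv k n ((nagataEquiv f) (h v))) ≠ 0 := fun eq ↦ h2 <|
      by simpa only [map_eq_zero_iff _ (AlgEquiv.injective _)] using eq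
    exact (Finset.sup_lt_iff <| Ne.bot_lt (fun x ↦ h2 <| degree_eq_bot.mp x)).mpr vs
  nth_rw 2 [← f.support_sum_monomial_coeff]
  rw [Finset.sum_eq_add_sum_sdiff_singleton_of_mem vin h]
  rw [leadingCoeff_finSuccEquiv_nagataEquiv_monomial] at coeff
  simpa only [coeff, algebraMap_eq] using (mem_support_iff.mp vin).isUnit.map MvPolynomial.C

end Nagata

/-! ### The induction on the codimension -/

/-- `M` embeds into a finitely generated `A`-module of projective dimension at most `r`. -/
def EmbedsInPdLE (A M : Type) [CommRing A] [AddCommGroup M] [Module A M] (r : ℕ) : Prop :=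
  ∃ (L : Type) (_ : AddCommGroup L) (_ : Module A L), Module.Finite A L ∧
    HasProjectiveDimensionLE (ModuleCat.of A L) r ∧ ∃ f : M →ₗ[A] L, Function.Injective f

attribute [local instance] RingHomInvPair.of_ringEquiv in
/-- Transport along a ring isomorphism compatible with the two actions on `M`. -/
theorem EmbedsInPdLE.of_ringEquiv {A B M : Type} [CommRing A] [CommRing B] (e : A ≃+* B)
    [AddCommGroup M] [Module A M] [Module B M] (he : ∀ (a : A) (m : M), e a • m = a • m) {r : ℕ}
    (h : EmbedsInPdLE B M r) : EmbedsInPdLE A M r := by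
  obtain ⟨L, _, _, hfin, hpd, f, hf⟩ := h
  let : Module A L := Module.compHom L (e : A →+* B)
  have hsmul : ∀ (a : A) (l : L), a • l = e a • l := fun _ _ => rfl
  let E : L ≃ₛₗ[RingHomClass.toRingHom e.symm] L :=
    { toFun := id
      invFun := id
      map_add' := fun _ _ => rfl
      map_smul' := fun b l => by
        rw [hsmul]; simp
      left_inv := fun _ => rfl
      right_inv := fun _ => rfl }
  refine ⟨L, inferInstance, inferInstance, ?_, ?_,
    { toFun := f
      map_add' := map_add f
      map_smul' := fun a m => by rw [← he, map_smul, RingHom.id_apply, hsmul] }, hf⟩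
  · exact Module.Finite.of_surjective E.toLinearMap E.surjective
  · exact ModuleCat.hasProjectiveDimensionLE_of_semiLinearEquiv e.symm (M := ModuleCat.of B L)
      (N := ModuleCat.of A L) E r

open Polynomial in
theorem finite_of_monic_smul_eq_zero {R M : Type} [CommRing R] [AddCommGroup M] [Module R M]
    [Module R[X] M] [IsScalarTower R R[X] M] [Module.Finite R[X] M] (g : R[X]) (hg : g.Monic)
    (hgM : ∀ m : M, g • m = 0) : Module.Finite R M := by
  have ht : Module.IsTorsionBySet R[X] M (Ideal.span {g} : Ideal R[X]) :=
    (Module.isTorsionBySet_span_singleton_iff g).2 hgM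
  let := ht.module
  have := ht.isScalarTower (S := R[X])
  have := ht.isScalarTower (S := R)
  have := hg.finite_quotient
  have : Module.Finite (R[X] ⧸ Ideal.span {g}) M := Module.Finite.of_restrictScalars_finite R[X] _ _
  exact Module.Finite.trans (R[X] ⧸ Ideal.span {g}) M

open Polynomial in
/-- For a module over `R[X]` killed by a monic polynomial, cyclic submodules over `R` and over `R[X]`
have the same dimension, since `R/ann_R(m) → R[X]/ann_{R[X]}(m)` is injective and integral. -/
theorem dim_quotient_annihilator_eq {R M : Type} [CommRing R] [AddCommGroup M] [Module R M]
    [Module R[X] M] [IsScalarTower R R[X] M] (g : R[X]) (hg : g.Monic)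
    (hgM : ∀ m : M, g • m = 0) (m : M) :
    ringKrullDim (R ⧸ (Submodule.span R {m}).annihilator) =
      ringKrullDim (R[X] ⧸ (Submodule.span R[X] {m}).annihilator) := by
  set J := (Submodule.span R[X] {m}).annihilator
  have hI : (Submodule.span R {m}).annihilator = J.comap (algebraMap R R[X]) := by
    ext a
    rw [Ideal.mem_comap, Submodule.mem_annihilator_span_singleton,
      Submodule.mem_annihilator_span_singleton, algebraMap_smul]
  rw [hI]
  have hgJ : g ∈ J := (Submodule.mem_annihilator_span_singleton _ _).2 (hgM m)
  have : Algebra.IsIntegral R (R[X] ⧸ J) := ⟨hg.quotient_isIntegral hgJ⟩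
  have : Algebra.IsIntegral (R ⧸ J.comap (algebraMap R R[X])) (R[X] ⧸ J) :=
    Algebra.IsIntegral.tower_top R
  have : FaithfulSMul (R ⧸ J.comap (algebraMap R R[X])) (R[X] ⧸ J) :=
    (faithfulSMul_iff_algebraMap_injective _ _).2 Ideal.algebraMap_quotient_injective
  exact dim_eq_of_integral _ _

/-- A nonzero polynomial in `n + 1` variables divides a polynomial that is monic in one variable, after
a suitable identification of the polynomial ring with `k[x_1, …, x_n][X]`. -/
theorem exists_ringEquiv_monic {k : Type} [Field k] {n : ℕ} (f : MvPolynomial (Fin (n + 1)) k)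
    (hf : f ≠ 0) : ∃ (e : MvPolynomial (Fin (n + 1)) k ≃+* Polynomial (MvPolynomial (Fin n) k))
      (g : Polynomial (MvPolynomial (Fin n) k)), g.Monic ∧ e f ∣ g := by
  obtain ⟨u, hu⟩ := isUnit_leadingCoeff_nagataEquiv f hf
  refine ⟨((nagataEquiv f).trans (MvPolynomial.finSuccEquiv k n)).toRingEquiv,
    MvPolynomial.finSuccEquiv k n (nagataEquiv f f) * Polynomial.C ↑u⁻¹, ?_, Dvd.intro _ rfl⟩
  exact Polynomial.monic_mul_C_of_leadingCoeff_mul_eq_one (by rw [← hu]; exact u.mul_inv)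

theorem dim_mvPolynomial (k : Type) [Field k] (n : ℕ) :
    ringKrullDim (MvPolynomial (Fin n) k) = n := by
  rw [MvPolynomial.ringKrullDim_of_isNoetherianRing, ringKrullDim_eq_zero_of_field]
  simp

theorem natCast_le {a b : ℕ} (h : (a : WithBot ℕ∞) ≤ b) : a ≤ b := by
  exact_mod_cast h

/-- The main result for all `r ≥ 0`, by induction on `r`; the zero module and `r = 0` are allowed so
that the induction runs. -/
theorem embedsInPdLE_of_pure (k : Type) [Field k] (r : ℕ) : ∀ (n : ℕ) (M : Type) [AddCommGroup M]
    [Module (MvPolynomial (Fin n) k) M] [Module.Finite (MvPolynomial (Fin n) k) M],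
    r ≤ n → IsPureMod k n r M → EmbedsInPdLE (MvPolynomial (Fin n) k) M r := by
  induction r with
  | zero =>
    intro n M _ _ _ _ h
    obtain ⟨s, _, f, hf⟩ := exists_embedding_of_torsionFree (A := MvPolynomial (Fin n) k) (M := M)
      fun a m ham => by
        by_contra! hne
        have h1 := h m hne.2
        have ha := (Submodule.mem_annihilator_span_singleton m a).2 ham
        -- A nonzero `a ∈ ann m` is a nonzerodivisor, so `dim (A / ann m) + 1 ≤ dim A`.
        have h2 := ringKrullDim_succ_le_of_surjective (Ideal.Quotient.mk
          (Submodule.span (MvPolynomial (Fin n) k) {m}).annihilator) Ideal.Quotient.mk_surjective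
          (mem_nonZeroDivisors_of_ne_zero hne.1) (Ideal.Quotient.eq_zero_iff_mem.2 ha)
        rw [h1, dim_mvPolynomial, Nat.sub_zero] at h2
        have h3 : n + 1 ≤ n := natCast_le ((Nat.cast_succ n).trans_le h2)
        omega
    exact ⟨_, inferInstance, inferInstance, inferInstance, (pd_zero_iff _).2 inferInstance, f, hf⟩
  | succ r ih =>
    intro n M _ _ hfin hrn h
    obtain ⟨n, rfl⟩ : ∃ n', n = n' + 1 := ⟨n - 1, by omega⟩
    -- Since `dim (A / ann m) < dim A`, no annihilator vanishes.
    have hex : ∀ m : M, ∃ a : MvPolynomial (Fin (n + 1)) k, a ≠ 0 ∧ a • m = 0 := by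
      intro m
      by_cases hm : m = 0
      · exact ⟨1, one_ne_zero, by rw [hm, smul_zero]⟩
      by_contra! hne
      have hbot : (Submodule.span (MvPolynomial (Fin (n + 1)) k) {m}).annihilator = ⊥ := by
        rw [eq_bot_iff]
        intro a ha
        by_contra ha0
        exact hne a ha0 ((Submodule.mem_annihilator_span_singleton m a).1 ha)
      have h1 := h m hm
      rw [hbot, ringKrullDim_eq_of_ringEquiv (RingEquiv.quotientBot _), dim_mvPolynomial] at h1
      have h3 : n + 1 ≤ n + 1 - (r + 1) := natCast_le h1.le
      omega
    obtain ⟨f, hf0, hfM⟩ : ∃ f : MvPolynomial (Fin (n + 1)) k, f ≠ 0 ∧ ∀ m : M, f • m = 0 := by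
      obtain ⟨N, v, hv⟩ := Module.Finite.exists_fin (R := MvPolynomial (Fin (n + 1)) k) (M := M)
      choose a ha hav using fun i => hex (v i)
      refine ⟨∏ i, a i, Finset.prod_ne_zero_iff.2 fun i _ => ha i, fun m => ?_⟩
      have hm : m ∈ Submodule.span _ (Set.range v) := hv ▸ Submodule.mem_top
      induction hm using Submodule.span_induction with
      | mem x hx =>
        obtain ⟨i, rfl⟩ := hx
        rw [← Finset.prod_erase_mul _ _ (Finset.mem_univ i), mul_smul, hav, smul_zero]
      | zero => simp
      | add x y _ _ hx hy => rw [smul_add, hx, hy, add_zero]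
      | smul c x _ hx => rw [smul_comm, hx, smul_zero]
    obtain ⟨e, g, hg, c, hc⟩ := exists_ringEquiv_monic f hf0
    let : Module (Polynomial (MvPolynomial (Fin n) k)) M :=
      Module.compHom M (e.symm : _ →+* MvPolynomial (Fin (n + 1)) k)
    have hsmul : ∀ p (m : M), p • m = e.symm p • m := fun _ _ => rfl
    have he : ∀ a (m : M), e a • m = a • m := fun a m => by rw [hsmul, e.symm_apply_apply]
    let : Module (MvPolynomial (Fin n) k) M := Module.compHom M Polynomial.C
    have : IsScalarTower (MvPolynomial (Fin n) k) (Polynomial (MvPolynomial (Fin n) k)) M :=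
      IsScalarTower.of_algebraMap_smul fun _ _ => rfl
    have hgM : ∀ m : M, g • m = 0 := fun m => by rw [hc, mul_comm, mul_smul, he, hfM, smul_zero]
    have hfinX : Module.Finite (Polynomial (MvPolynomial (Fin n) k)) M := by
      obtain ⟨s, hs⟩ := hfin.fg_top
      refine ⟨⟨s, eq_top_iff.2 fun m _ => ?_⟩⟩
      have hm : m ∈ Submodule.span (MvPolynomial (Fin (n + 1)) k) (s : Set M) :=
        hs ▸ Submodule.mem_top
      induction hm using Submodule.span_induction with
      | mem x hx => exact Submodule.subset_span hx
      | zero => exact zero_mem _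
      | add x y _ _ hx hy => exact add_mem (hx trivial) (hy trivial)
      | smul c x _ hx => rw [← he]; exact Submodule.smul_mem _ _ (hx trivial)
    have := finite_of_monic_smul_eq_zero g hg hgM
    have hpure : IsPureMod k n r M := fun m hm => by
      rw [dim_quotient_annihilator_eq g hg hgM, ← Nat.add_sub_add_right n 1 r, ← h m hm]
      refine (ringKrullDim_eq_of_ringEquiv (Ideal.quotientEquiv _ _ e ?_)).symm
      ext p
      rw [Ideal.map_comap_of_equiv, Ideal.mem_comap]
      simp only [Submodule.mem_annihilator_span_singleton]
      rfl
    obtain ⟨L', _, _, _, hpd, ι, hι⟩ := ih n M (by omega) hpure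
    exact EmbedsInPdLE.of_ringEquiv e he (exists_coinduced g hg hgM ι hι r hpd)

/-- For `A = k[x_1, …, x_n]` with `k` a field and `1 ≤ r ≤ n`, and `M` a nonzero finitely
generated `r`-pure `A`-module: there exist a finitely generated `A`-module `L` of projective
dimension at most `r` (expressed by the standard characterization that `Ext^i_A(L, N) = 0`
for all modules `N` and all `i > r`) and an injective `A`-linear map `M → L`. -/
theorem pure_embeds_into_module_of_pd_le (k : Type) [Field k] (n : ℕ) (hn : 1 ≤ n)
    (M : Type) [AddCommGroup M] [Module (MvPolynomial (Fin n) k) M]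
    [Module.Finite (MvPolynomial (Fin n) k) M] [Nontrivial M]
    (r : ℕ) (hr1 : 1 ≤ r) (hrn : r ≤ n) (hpure : IsPureMod k n r M) :
    ∃ L : ModuleCat (MvPolynomial (Fin n) k),
      Module.Finite (MvPolynomial (Fin n) k) L ∧
      (∀ (N : ModuleCat (MvPolynomial (Fin n) k)) (i : ℕ), r < i →
        Subsingleton (((Ext (MvPolynomial (Fin n) k) (ModuleCat (MvPolynomial (Fin n) k)) i).obj
          (Opposite.op L)).obj N)) ∧
      ∃ f : M →ₗ[MvPolynomial (Fin n) k] L, Function.Injective f := by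
  obtain ⟨L, _, _, hfin, hpd, f, hf⟩ := embedsInPdLE_of_pure k r n M hrn hpure
  exact ⟨ModuleCat.of _ L, hfin, fun N i hi => ext_subsingleton_of_pd _ N r i hi, f, hf⟩
end

section
/- Let 0 ≤ r ≤ n, let S = k[x_1,…,x_{n−r}] \ {0} be the multiplicative set of nonzero polynomials involving only the first n − r variables, viewed inside A, and let M be a nonzero finitely generated A-module with cd(M) = r. (i) If the canonical localization map M → S^{-1}M is injective, then M is r-pure. (ii) Conversely, if k is infinite and M is r-pure, then there exists an invertible k-linear change of the variables x_1,…,x_n (a k-algebra automorphism of A induced by a matrix in GL_n(k)) after which the canonical localization map M → S^{-1}M is injective. -/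
/-- The multiplicative set `S = k[x_1, …, x_{n-r}] \ {0}` of nonzero polynomials in the first
`n - r` variables, viewed inside `A = k[x_1, …, x_n]` (as the image of the nonzero polynomials
under the injection renaming the variables of `k[x_1, …, x_{n-r}]` to the first `n - r`
variables of `A`). -/
noncomputable def firstVarsNonzero (k : Type) [Field k] (n r : ℕ) :
    Submonoid (MvPolynomial (Fin n) k) :=
  Submonoid.map
    ((MvPolynomial.rename (Fin.castLE (Nat.sub_le n r)) :
        MvPolynomial (Fin (n - r)) k →ₐ[k] MvPolynomial (Fin n) k) :
      MvPolynomial (Fin (n - r)) k →* MvPolynomial (Fin n) k)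
    (nonZeroDivisors (MvPolynomial (Fin (n - r)) k))

/-! ### Krull dimension and integral maps -/

/-- Incomparability: contraction of primes along an integral map is strictly monotone. -/
lemma ringKrullDim_le_of_isIntegral {R S : Type*} [CommRing R] [CommRing S] (f : R →+* S)
    (hf : f.IsIntegral) : ringKrullDim S ≤ ringKrullDim R := by
  algebraize [f]
  refine Order.krullDim_le_of_strictMono (PrimeSpectrum.comap (algebraMap R S)) ?_
  intro p q hpq
  exact Ideal.IsIntegral.comap_lt_comap (R := R) (I := p.asIdeal) (J := q.asIdeal) hpq

/-- Lying over and going up: every chain of primes of `R` lifts to `S`. -/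
lemma ringKrullDim_le_of_isIntegral_of_injective {R S : Type*} [CommRing R] [CommRing S]
    (f : R →+* S) (hf : f.IsIntegral) (hinj : Function.Injective f) :
    ringKrullDim R ≤ ringKrullDim S := by
  algebraize [f]
  refine iSup_le fun l => ?_
  obtain ⟨P, -, hP, hPl⟩ := Ideal.exists_ideal_over_prime_of_isIntegral (S := S)
    l.head.asIdeal ⊥ (by
      rw [← RingHom.ker_eq_comap_bot, (RingHom.injective_iff_ker_eq_bot (algebraMap R S)).1 hinj]
      exact bot_le)
  have : P.LiesOver l.head.asIdeal := ⟨hPl.symm⟩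
  obtain ⟨L', hL, -, -⟩ := Ideal.exists_ltSeries_of_hasGoingUp l P
  rw [← hL]
  exact Order.LTSeries.length_le_krullDim L'

/-- An integral map out of a domain with a nonzero element `a` in its kernel factors through the
quotient by `a`, whose dimension is smaller; this is what forces injectivity when dimensions agree. -/
lemma ringKrullDim_add_one_le_of_isIntegral {R S : Type*} [CommRing R] [IsDomain R] [CommRing S]
    (f : R →+* S) (hf : f.IsIntegral) (hinj : ¬ Function.Injective f) :
    ringKrullDim S + 1 ≤ ringKrullDim R := by
  obtain ⟨a, ha, ha0⟩ : ∃ a, f a = 0 ∧ a ≠ 0 := by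
    simpa [injective_iff_map_eq_zero] using hinj
  refine le_trans ?_ (ringKrullDim_quotient_succ_le_of_nonZeroDivisor
    (mem_nonZeroDivisors_of_ne_zero ha0))
  gcongr
  have hs : ∀ x ∈ Ideal.span {a}, f x = 0 := fun x hx => by
    obtain ⟨y, rfl⟩ := Ideal.mem_span_singleton'.1 hx
    simp [ha]
  refine ringKrullDim_le_of_isIntegral (Ideal.Quotient.lift (Ideal.span {a}) f hs) ?_
  refine RingHom.IsIntegral.tower_top (Ideal.Quotient.mk _) _ ?_
  rwa [Ideal.Quotient.lift_comp_mk]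

/-- Both sides are compared with the transcendence degree of `B` over `k`: the images of the `d`
variables are algebraically independent, and `B` is algebraic over the subalgebra generated by
the images of the `s` variables. -/
lemma le_of_integral_of_injective {k B : Type*} [Field k] [CommRing B] [IsDomain B] [Algebra k B]
    {d s : ℕ} (f : MvPolynomial (Fin d) k →ₐ[k] B) (hf : Function.Injective f)
    (g : MvPolynomial (Fin s) k →ₐ[k] B) (hg : g.IsIntegral) : d ≤ s := by
  have hind : AlgebraicIndependent k (fun i => f (MvPolynomial.X i)) := by
    have : MvPolynomial.aeval (fun i => f (MvPolynomial.X i)) = f := by ext; simp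
    rw [AlgebraicIndependent, this]; exact hf
  have hr : Algebra.adjoin k (Set.range fun i => g (MvPolynomial.X i)) = g.range := by
    rw [Algebra.adjoin_range_eq_range_aeval]
    congr 1; ext; simp
  have halg : Algebra.IsIntegral (Algebra.adjoin k (Set.range fun i => g (MvPolynomial.X i))) B := by
    rw [hr]
    refine ⟨fun x => ?_⟩
    obtain ⟨p, hp, hx⟩ := hg x
    refine ⟨p.map (g.rangeRestrict : _ →+* g.range), hp.map _, ?_⟩
    rw [Polynomial.eval₂_map]
    exact hx
  have h1 := hind.lift_cardinalMk_le_trdeg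
  have h2 := Algebra.IsAlgebraic.trdeg_le_cardinalMk k (Set.range fun i => g (MvPolynomial.X i))
  have h3 := Cardinal.mk_range_le_lift (f := fun i => g (MvPolynomial.X i))
  have h4 : Cardinal.lift.{0} (Algebra.trdeg k B) ≤ Cardinal.lift.{0} (s : Cardinal) := by
    refine (Cardinal.lift_le.2 h2).trans ?_
    simpa using h3
  simp at h1 h4
  exact_mod_cast h1.trans h4

/-- If no nonzero polynomial in `d` variables is sent into `J` by `f`, then `A ⧸ J` has dimension
at least `d`: a prime over `J` that is disjoint from the image of the nonzero polynomials has a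
coordinate ring of transcendence degree at least `d`, and Noether normalization turns this into a
bound on the dimension. -/
lemma le_ringKrullDim_quotient {k : Type} [Field k] {n d : ℕ} (J : Ideal (MvPolynomial (Fin n) k))
    (f : MvPolynomial (Fin d) k →ₐ[k] MvPolynomial (Fin n) k) (hf : ∀ p, p ≠ 0 → f p ∉ J) :
    (d : WithBot ℕ∞) ≤ ringKrullDim (MvPolynomial (Fin n) k ⧸ J) := by
  obtain ⟨P, hP, hJP, hdis⟩ := Ideal.exists_le_prime_disjoint J
    ((nonZeroDivisors (MvPolynomial (Fin d) k)).map (f : _ →* MvPolynomial (Fin n) k)) (by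
      rw [Set.disjoint_left]
      rintro _ hx ⟨p, hp, rfl⟩
      exact hf p (nonZeroDivisors.ne_zero hp) hx)
  -- Noether normalization of the domain `A ⧸ P` by `s` variables
  obtain ⟨s, -, g, hginj, hg⟩ := exists_integral_inj_algHom_of_quotient P hP.ne_top
  have hds : d ≤ s := by
    refine le_of_integral_of_injective ((Ideal.Quotient.mkₐ k P).comp f) ?_ g hg
    rw [injective_iff_map_eq_zero]
    intro p hp
    by_contra hp0
    exact Set.disjoint_left.1 hdis (Ideal.Quotient.eq_zero_iff_mem.1 hp)
      ⟨p, mem_nonZeroDivisors_of_ne_zero hp0, rfl⟩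
  calc (d : WithBot ℕ∞) ≤ s := by exact_mod_cast hds
    _ = ringKrullDim (MvPolynomial (Fin s) k) := by simp
    _ ≤ ringKrullDim (MvPolynomial (Fin n) k ⧸ P) :=
      ringKrullDim_le_of_isIntegral_of_injective g.toRingHom hg hginj
    _ ≤ _ := ringKrullDim_le_of_surjective (Ideal.Quotient.factor hJP)
      (Ideal.Quotient.factor_surjective hJP)

/-! ### Noether normalization by linear forms -/

open MvPolynomial in
/-- Substituting the affine polynomials `b i + a i * T` into `f` gives a polynomial in `T` of degree
at most the total degree of `f`, whose coefficient in that degree is the value at `a` of the top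
homogeneous component of `f`. -/
lemma coeff_aeval_affine {k R σ : Type*} [Field k] [CommRing R] [Algebra k R] [Fintype σ]
    (a : σ → k) (b : σ → R) (f : MvPolynomial σ k) :
    let F := aeval (fun i => Polynomial.C (b i) +
      Polynomial.C (algebraMap k R (a i)) * Polynomial.X) f
    F.natDegree ≤ f.totalDegree ∧
      F.coeff f.totalDegree =
        algebraMap k R (eval a (homogeneousComponent f.totalDegree f)) := by
  intro F
  set e := f.totalDegree
  set L : σ → Polynomial R := fun i => Polynomial.C (b i) +
      Polynomial.C (algebraMap k R (a i)) * Polynomial.X with hL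
  have hLd : ∀ i, (L i).natDegree ≤ 1 := fun i => by
    simp only [hL]; compute_degree
  have hLc : ∀ i, (L i).coeff 1 = algebraMap k R (a i) := fun i => by
    simp [hL, Polynomial.coeff_C]
  have key : ∀ s : σ →₀ ℕ, (∏ i, L i ^ s i).natDegree ≤ s.degree ∧
      (∏ i, L i ^ s i).coeff s.degree = ∏ i, algebraMap k R (a i) ^ s i := by
    intro s
    have : ∀ t : Finset σ, (∏ i ∈ t, L i ^ s i).natDegree ≤ ∑ i ∈ t, s i ∧
      (∏ i ∈ t, L i ^ s i).coeff (∑ i ∈ t, s i) = ∏ i ∈ t, algebraMap k R (a i) ^ s i := by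
      classical
      intro t
      induction t using Finset.induction_on with
      | empty => simp
      | insert j t hj ih =>
        rw [Finset.prod_insert hj, Finset.sum_insert hj, Finset.prod_insert hj]
        have hp : (L j ^ s j).natDegree ≤ s j := by
          simpa using Polynomial.natDegree_pow_le_of_le (s j) (hLd j)
        refine ⟨Polynomial.natDegree_mul_le_of_le hp ih.1, ?_⟩
        rw [Polynomial.coeff_mul_add_eq_of_natDegree_le hp ih.1, ih.2]
        congr 1
        have := Polynomial.coeff_pow_of_natDegree_le (m := s j) (hLd j)
        rwa [mul_one, hLc] at this
    have h := this Finset.univ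
    rwa [← Finsupp.degree_eq_sum] at h
  have hF : F = ∑ s ∈ f.support,
      Polynomial.C (algebraMap k R (coeff s f)) * ∏ i, L i ^ s i := by
    simp only [F]
    rw [aeval_def, eval₂_eq']
    rfl
  have hle : ∀ s ∈ f.support, s.degree ≤ e := fun s hs => by
    have := le_totalDegree hs
    rwa [Finsupp.sum_fintype _ _ (by simp), ← Finsupp.degree_eq_sum] at this
  constructor
  · rw [hF]
    refine Polynomial.natDegree_sum_le_of_forall_le _ _ fun s hs => ?_
    exact (Polynomial.natDegree_C_mul_le _ _).trans ((key s).1.trans (hle s hs))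
  · rw [hF, Polynomial.finsetSum_coeff, homogeneousComponent_apply, map_sum, map_sum,
      Finset.sum_filter]
    refine Finset.sum_congr rfl fun s hs => ?_
    rw [Polynomial.coeff_C_mul]
    split_ifs with h
    · rw [← h, (key s).2, eval_monomial, Finsupp.prod_fintype _ _ (by simp)]
      simp
    · rw [Polynomial.coeff_eq_zero_of_natDegree_lt, mul_zero]
      exact (key s).1.trans_lt (lt_of_le_of_ne (hle s hs) h)

/-- Over an infinite field the top homogeneous component of `f ≠ 0` is nonzero at some point off the
hyperplane where the last coordinate vanishes; by homogeneity the last coordinate can be scaled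
to `1`. -/
lemma exists_direction {k : Type*} [Field k] [Infinite k] {l : ℕ}
    (f : MvPolynomial (Fin (l + 1)) k) (hf : f ≠ 0) :
    ∃ a : Fin (l + 1) → k, a (Fin.last l) = 1 ∧
      MvPolynomial.eval a (MvPolynomial.homogeneousComponent f.totalDegree f) ≠ 0 := by
  set h := MvPolynomial.homogeneousComponent f.totalDegree f with hh
  have h0 : h ≠ 0 := by
    obtain ⟨s, hs, hs'⟩ := Finset.exists_mem_eq_sup f.support
      (MvPolynomial.support_nonempty.2 hf) (fun s => s.sum fun _ e => e)
    have hdeg : s.degree = f.totalDegree := by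
      rw [MvPolynomial.totalDegree, hs', Finsupp.sum_fintype _ _ (by simp), Finsupp.degree_eq_sum]
    intro H
    have := congrArg (MvPolynomial.coeff s) H
    rw [hh, MvPolynomial.coeff_homogeneousComponent, if_pos hdeg] at this
    exact MvPolynomial.mem_support_iff.1 hs this
  -- the factor `X (Fin.last l)` forces the last coordinate of `a` to be nonzero
  obtain ⟨a, ha⟩ : ∃ a, MvPolynomial.eval a (h * MvPolynomial.X (Fin.last l)) ≠ 0 := by
    by_contra! H
    exact mul_ne_zero h0 (MvPolynomial.X_ne_zero _) (MvPolynomial.funext (by simpa using H))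
  simp only [map_mul, MvPolynomial.eval_X, mul_ne_zero_iff] at ha
  refine ⟨fun i => (a (Fin.last l))⁻¹ * a i, inv_mul_cancel₀ ha.2, ?_⟩
  have : MvPolynomial.eval (fun i => (a (Fin.last l))⁻¹ * a i) h =
    (a (Fin.last l))⁻¹ ^ f.totalDegree * MvPolynomial.eval a h := by
    rw [hh, MvPolynomial.homogeneousComponent_apply, map_sum, map_sum, Finset.mul_sum]
    refine Finset.sum_congr rfl fun s hs => ?_
    rw [← (Finset.mem_filter.1 hs).2, MvPolynomial.eval_monomial, MvPolynomial.eval_monomial,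
      Finsupp.prod_fintype _ _ (by simp), Finsupp.prod_fintype _ _ (by simp),
      Finsupp.degree_eq_sum, ← Finset.prod_pow_eq_pow_sum]
    simp only [mul_pow, Finset.prod_mul_distrib]
    ring
  rw [this]
  exact mul_ne_zero (pow_ne_zero _ (inv_ne_zero ha.2)) ha.1

/-- One step of linear Noether normalization: if `B` is integral over the polynomials in
`u 0, …, u l` and these satisfy a relation, then `B` is already integral over the polynomials in
`l` elements of the form `u i - a i • u l`. -/
lemma integral_step {k B : Type*} [Field k] [Infinite k] [CommRing B] [Algebra k B] {l : ℕ}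
    (u : Fin (l + 1) → B)
    (hu : (MvPolynomial.aeval u : MvPolynomial (Fin (l + 1)) k →ₐ[k] B).IsIntegral)
    (hinj : ¬ Function.Injective (MvPolynomial.aeval u : MvPolynomial (Fin (l + 1)) k →ₐ[k] B)) :
    ∃ a : Fin l → k, (MvPolynomial.aeval (fun i => u i.castSucc - a i • u (Fin.last l)) :
      MvPolynomial (Fin l) k →ₐ[k] B).IsIntegral := by
  obtain ⟨f, hf0, hf⟩ : ∃ f, MvPolynomial.aeval (R := k) u f = 0 ∧ f ≠ 0 := by
    simpa [injective_iff_map_eq_zero] using hinj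
  obtain ⟨a, ha1, ha⟩ := exists_direction f hf
  refine ⟨fun i => a i.castSucc, ?_⟩
  set v : Fin l → B := fun i => u i.castSucc - a i.castSucc • u (Fin.last l) with hv
  set g : MvPolynomial (Fin l) k →ₐ[k] B := MvPolynomial.aeval v with hg
  -- `b i + a i * T` goes to `u i` under `X i ↦ v i` and `T ↦ u l`, so `F` below has the root `u l`
  let b : Fin (l + 1) → MvPolynomial (Fin l) k := Fin.snoc MvPolynomial.X 0
  set c := MvPolynomial.eval a (MvPolynomial.homogeneousComponent f.totalDegree f) with hc
  obtain ⟨hdeg, hcoeff⟩ := coeff_aeval_affine (R := MvPolynomial (Fin l) k) a b f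
  set F := MvPolynomial.aeval (fun i => Polynomial.C (b i) +
      Polynomial.C (algebraMap k (MvPolynomial (Fin l) k) (a i)) * Polynomial.X) f with hF
  have hFroot : F.eval₂ (g : MvPolynomial (Fin l) k →+* B) (u (Fin.last l)) = 0 := by
    have hE : (Polynomial.eval₂RingHom (g : MvPolynomial (Fin l) k →+* B) (u (Fin.last l))).comp
        (MvPolynomial.aeval (R := k) (fun i => Polynomial.C (b i) +
          Polynomial.C (algebraMap k (MvPolynomial (Fin l) k) (a i)) * Polynomial.X) :
            MvPolynomial (Fin (l + 1)) k →ₐ[k] _).toRingHom =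
        (MvPolynomial.aeval (R := k) u).toRingHom := by
      refine MvPolynomial.ringHom_ext (fun c => ?_) (fun i => ?_)
      · simp [Polynomial.algebraMap_apply]
      · refine Fin.lastCases ?_ (fun i => ?_) i
        · simp [b, ha1]
        · simp [b, hg, hv, Algebra.smul_def]
    exact (congrArg (fun φ => φ f) hE).trans hf0
  have hlast : (g : MvPolynomial (Fin l) k →+* B).IsIntegralElem (u (Fin.last l)) := by
    refine ⟨Polynomial.C (algebraMap k _ c⁻¹) * F, ?_, ?_⟩
    · refine Polynomial.monic_of_natDegree_le_of_coeff_eq_one f.totalDegree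
        ((Polynomial.natDegree_C_mul_le _ _).trans hdeg) ?_
      rw [Polynomial.coeff_C_mul, hcoeff, ← map_mul, inv_mul_cancel₀ ha, map_one]
    · rw [Polynomial.eval₂_mul, hFroot, mul_zero]
  have hall : ∀ i, (g : MvPolynomial (Fin l) k →+* B).IsIntegralElem (u i) := by
    intro i
    refine Fin.lastCases hlast (fun i => ?_) i
    have : u i.castSucc = g (MvPolynomial.X i) +
        g (MvPolynomial.C (a i.castSucc)) * u (Fin.last l) := by
      simp [hg, hv, Algebra.smul_def]
    rw [this]
    exact RingHom.IsIntegralElem.add _ (RingHom.isIntegralElem_map (g : MvPolynomial (Fin l) k →+* B))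
      (RingHom.IsIntegralElem.mul _ (RingHom.isIntegralElem_map (g : MvPolynomial (Fin l) k →+* B)) hlast)
  -- `B` is integral over the integral closure of `k[v]`, which contains every `u i`
  let _ := (g : MvPolynomial (Fin l) k →+* B).toAlgebra
  let N := integralClosure (MvPolynomial (Fin l) k) B
  have hmem : ∀ p, MvPolynomial.aeval (R := k) u p ∈ N := by
    intro p
    induction p using MvPolynomial.induction_on with
    | C c =>
      have : MvPolynomial.aeval (R := k) u (MvPolynomial.C c) = g (MvPolynomial.C c) := by simp [hg]
      rw [this]
      exact N.algebraMap_mem (MvPolynomial.C c)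
    | add p q hp hq => rw [map_add]; exact N.add_mem hp hq
    | mul_X p i hp => rw [map_mul, MvPolynomial.aeval_X]; exact N.mul_mem hp (hall i)
  let φ : MvPolynomial (Fin (l + 1)) k →+* N :=
    (MvPolynomial.aeval (R := k) u : _ →+* B).codRestrict N hmem
  have hN : (algebraMap N B).IsIntegral := RingHom.IsIntegral.tower_top φ _ hu
  have h1 : (algebraMap (MvPolynomial (Fin l) k) N).IsIntegral :=
    fun x => Algebra.IsIntegral.isIntegral x
  exact RingHom.IsIntegral.trans _ _ h1 hN

/-- The linear form with coefficient vector `w`. -/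
noncomputable def linForm (k : Type) [Field k] {n : ℕ} (w : Fin n → k) : MvPolynomial (Fin n) k :=
  ∑ j, MvPolynomial.C (w j) * MvPolynomial.X j

lemma linForm_sub_smul {k : Type} [Field k] {n : ℕ} (v w : Fin n → k) (a : k) :
    linForm k (v - a • w) = linForm k v - a • linForm k w := by
  simp only [linForm, Finset.smul_sum, ← Finset.sum_sub_distrib]
  refine Finset.sum_congr rfl fun j _ => ?_
  simp [MvPolynomial.smul_eq_C_mul]
  ring

lemma linForm_sum_smul {k : Type} [Field k] {n m : ℕ} (c : Fin m → k) (w : Fin m → Fin n → k) :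
    linForm k (∑ i, c i • w i) = ∑ i, c i • linForm k (w i) := by
  simp only [linForm, Finset.smul_sum]
  rw [Finset.sum_comm]
  refine Finset.sum_congr rfl fun j _ => ?_
  simp [MvPolynomial.smul_eq_C_mul, Finset.sum_mul, mul_assoc]

/-- Noether normalization by linear forms: over an infinite field, `A ⧸ I` is integral over the
polynomials in `dim (A ⧸ I)` linear forms. -/
lemma exists_linear_noether {k : Type} [Field k] [Infinite k] {n d : ℕ}
    (I : Ideal (MvPolynomial (Fin n) k))
    (hI : ringKrullDim (MvPolynomial (Fin n) k ⧸ I) = d) :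
    ∃ w : Fin d → Fin n → k,
      ((Ideal.Quotient.mkₐ k I).comp (MvPolynomial.aeval fun i => linForm k (w i))).IsIntegral := by
  classical
  -- the least number of linear forms that suffice turns out to be `d`
  let Q : ℕ → Prop := fun m => ∃ w : Fin m → Fin n → k,
    ((Ideal.Quotient.mkₐ k I).comp (MvPolynomial.aeval fun i => linForm k (w i))).IsIntegral
  have hQn : Q n := by
    refine ⟨fun i => Pi.single i 1, ?_⟩
    have h : (MvPolynomial.aeval fun i => linForm k (Pi.single i (1 : k) : Fin n → k)) =
        AlgHom.id k (MvPolynomial (Fin n) k) := by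
      ext i : 1
      simp [linForm, Pi.single_apply, apply_ite]
    rw [h]
    exact RingHom.isIntegral_of_surjective _ (Ideal.Quotient.mkₐ_surjective k I)
  have hex : ∃ m, Q m := ⟨n, hQn⟩
  have hspec : Q (Nat.find hex) := Nat.find_spec hex
  have hle : Nat.find hex ≤ d := by
    by_contra! hlt
    obtain ⟨l, hl⟩ : ∃ l, Nat.find hex = l + 1 := ⟨Nat.find hex - 1, by omega⟩
    obtain ⟨w, hw⟩ : Q (l + 1) := hl ▸ hspec
    have hcomp : ∀ {m : ℕ} (v : Fin m → Fin n → k),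
        (Ideal.Quotient.mkₐ k I).comp (MvPolynomial.aeval fun i => linForm k (v i)) =
        MvPolynomial.aeval (fun i => Ideal.Quotient.mkₐ k I (linForm k (v i))) := fun v => by
      ext i; simp
    rw [hcomp] at hw
    by_cases hinj : Function.Injective (MvPolynomial.aeval (R := k)
        (fun i => Ideal.Quotient.mkₐ k I (linForm k (w i))))
    · have := ringKrullDim_le_of_isIntegral_of_injective (AlgHom.toRingHom _) hw hinj
      rw [hI] at this
      simp only [MvPolynomial.ringKrullDim_of_isNoetherianRing, ringKrullDim_eq_zero_of_field,
        Nat.card_fin, zero_add] at this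
      have : l + 1 ≤ d := by exact_mod_cast this
      omega
    · obtain ⟨a, ha⟩ := integral_step _ hw hinj
      refine Nat.find_min hex (m := l) (by omega)
        ⟨fun i => w i.castSucc - a i • w (Fin.last l), ?_⟩
      rw [hcomp]
      simpa only [linForm_sub_smul, map_sub, map_smul] using ha
  have hge : d ≤ Nat.find hex := by
    obtain ⟨w, hw⟩ := hspec
    have := ringKrullDim_le_of_isIntegral (AlgHom.toRingHom _) hw
    rw [hI] at this
    simp only [MvPolynomial.ringKrullDim_of_isNoetherianRing, ringKrullDim_eq_zero_of_field,
        Nat.card_fin, zero_add] at this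
    exact_mod_cast this
  have heq : Nat.find hex = d := le_antisymm hle hge
  exact heq ▸ hspec

/-! ### Independence of the linear forms modulo annihilators -/

/-- If `A ⧸ I` is integral over the polynomials in `d` elements and the further quotient `A ⧸ P`
still has dimension `d`, then those elements stay algebraically independent modulo `P`. -/
lemma injective_of_dim_eq {k : Type} [Field k] {n d : ℕ} {I P : Ideal (MvPolynomial (Fin n) k)}
    (hIP : I ≤ P) (hP : ringKrullDim (MvPolynomial (Fin n) k ⧸ P) = d)
    (f : MvPolynomial (Fin d) k →ₐ[k] MvPolynomial (Fin n) k)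
    (hf : ((Ideal.Quotient.mkₐ k I).comp f).IsIntegral) :
    ∀ p, f p ∈ P → p = 0 := by
  have hint : ((Ideal.Quotient.mkₐ k P).comp f).toRingHom.IsIntegral :=
    RingHom.IsIntegral.trans _ (Ideal.Quotient.factor hIP) hf
      (RingHom.isIntegral_of_surjective _ (Ideal.Quotient.factor_surjective hIP))
  have hinj : Function.Injective ((Ideal.Quotient.mkₐ k P).comp f).toRingHom := by
    by_contra H
    have := ringKrullDim_add_one_le_of_isIntegral _ hint H
    rw [hP] at this
    simp only [MvPolynomial.ringKrullDim_of_isNoetherianRing, ringKrullDim_eq_zero_of_field,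
        Nat.card_fin, zero_add] at this
    have : d + 1 ≤ d := by exact_mod_cast this
    omega
  intro p hp
  exact hinj (by rw [map_zero]; exact Ideal.Quotient.eq_zero_iff_mem.2 hp)

lemma linearIndependent_of_aeval_linForm_injective {k : Type} [Field k] {n d : ℕ}
    (w : Fin d → Fin n → k)
    (hw : ∀ p : MvPolynomial (Fin d) k, MvPolynomial.aeval (fun i => linForm k (w i)) p = 0 → p = 0) :
    LinearIndependent k w := by
  rw [Fintype.linearIndependent_iff]
  intro c hc i
  have h := hw (∑ i, c i • MvPolynomial.X i) (by
    simp only [map_sum, map_smul, MvPolynomial.aeval_X]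
    rw [← linForm_sum_smul, hc]
    simp [linForm])
  have h2 := congrArg (MvPolynomial.coeff (Finsupp.single i 1)) h
  classical
  simpa [MvPolynomial.coeff_sum, MvPolynomial.coeff_X, Finsupp.single_left_inj] using h2

lemma exists_matrix_extending {k : Type} [Field k] {n d : ℕ} (hd : d ≤ n) (w : Fin d → Fin n → k)
    (hw : LinearIndependent k w) :
    ∃ g : Matrix (Fin n) (Fin n) k, IsUnit g.det ∧ ∀ i, g (Fin.castLE hd i) = w i := by
  classical
  let b := Module.Basis.sumExtend hw
  have hbl : ∀ i, b (Sum.inl i) = w i := fun i => by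
    simp only [b, Module.Basis.sumExtend, Module.Basis.reindex_apply, Module.Basis.coe_extend]
    rfl
  have : Finite (Fin d ⊕ Module.Basis.sumExtendIndex hw) := Module.Finite.finite_basis b
  have : Finite (Module.Basis.sumExtendIndex hw) :=
    Finite.of_injective (Sum.inr : _ → Fin d ⊕ _) Sum.inr_injective
  have hcard : d + Nat.card (Module.Basis.sumExtendIndex hw) = n := by
    have := Module.finrank_eq_nat_card_basis b
    simpa [Nat.card_sum] using this.symm
  let e : Fin d ⊕ Module.Basis.sumExtendIndex hw ≃ Fin n :=
    ((Equiv.refl _).sumCongr (Finite.equivFin _)).trans (finSumFinEquiv.trans (finCongr hcard))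
  have he : ∀ i, e (Sum.inl i) = Fin.castLE hd i := fun i => Fin.ext rfl
  refine ⟨Matrix.of (b.reindex e), ?_, fun i => ?_⟩
  · rw [← Matrix.isUnit_iff_isUnit_det, ← Matrix.linearIndependent_rows_iff_isUnit]
    exact (b.reindex e).linearIndependent
  · rw [← he]
    change b.reindex e (e (Sum.inl i)) = w i
    rw [Module.Basis.reindex_apply, Equiv.symm_apply_apply, hbl]

lemma injective_mkLinearMap_iff {R M : Type*} [CommRing R] [AddCommGroup M] [Module R M]
    (S : Submonoid R) : Function.Injective (LocalizedModule.mkLinearMap S M) ↔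
      ∀ s ∈ S, ∀ m : M, s • m = 0 → m = 0 := by
  rw [injective_iff_map_eq_zero]
  simp only [IsLocalizedModule.eq_zero_iff S]
  exact ⟨fun h s hs m hm => h m ⟨⟨s, hs⟩, hm⟩, fun h m ⟨s, hm⟩ => h s s.2 m hm⟩

/-- For `A = k[x_1, …, x_n]`, `0 ≤ r ≤ n`, `S = k[x_1, …, x_{n-r}] \ {0}` and `M` a nonzero
finitely generated `A`-module with `cd(M) = r` (i.e. `dim (A / ann_A M) = n - r`):
(i) if the localization map `M → S⁻¹M` is injective then `M` is `r`-pure;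
(ii) conversely, if `k` is infinite and `M` is `r`-pure, then after some invertible `k`-linear
change of variables (given by a matrix `g ∈ GL_n(k)`, acting through the `k`-algebra
endomorphism `x_i ↦ ∑_j g_{ij} x_j` of `A`) the localization map becomes injective, i.e.
`M → (φ_g(S))⁻¹M` is injective where `φ_g` is the induced automorphism of `A`. -/
theorem pure_iff_relative_localization (k : Type) [Field k] (n : ℕ) (hn : 1 ≤ n)
    (M : Type) [AddCommGroup M] [Module (MvPolynomial (Fin n) k) M]
    [Module.Finite (MvPolynomial (Fin n) k) M] [Nontrivial M]
    (r : ℕ) (hr : r ≤ n)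
    (hcd : ringKrullDim (MvPolynomial (Fin n) k ⧸
        Module.annihilator (MvPolynomial (Fin n) k) M) = ((n - r : ℕ) : WithBot (WithTop ℕ))) :
    (Function.Injective (LocalizedModule.mkLinearMap (firstVarsNonzero k n r) M) →
      IsPureMod k n r M) ∧
    (Infinite k → IsPureMod k n r M →
      ∃ g : Matrix (Fin n) (Fin n) k, IsUnit g.det ∧
        Function.Injective (LocalizedModule.mkLinearMap
          (Submonoid.map
            (((MvPolynomial.aeval
                (fun i : Fin n => ∑ j : Fin n, MvPolynomial.C (g i j) * MvPolynomial.X j) :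
              MvPolynomial (Fin n) k →ₐ[k] MvPolynomial (Fin n) k) :
              MvPolynomial (Fin n) k →* MvPolynomial (Fin n) k))
            (firstVarsNonzero k n r)) M)) := by
  have hann : ∀ m : M, Module.annihilator (MvPolynomial (Fin n) k) M ≤
      (Submodule.span (MvPolynomial (Fin n) k) {m}).annihilator := fun m =>
    LinearMap.annihilator_le_of_injective (Submodule.subtype _) (Submodule.subtype_injective _)
  constructor
  · intro hinj m hm
    rw [injective_mkLinearMap_iff] at hinj
    refine le_antisymm ?_ ?_
    · rw [← hcd]
      exact ringKrullDim_le_of_surjective (Ideal.Quotient.factor (hann m))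
        (Ideal.Quotient.factor_surjective _)
    · refine le_ringKrullDim_quotient _ (MvPolynomial.rename (Fin.castLE (Nat.sub_le n r))) ?_
      intro p hp hmem
      exact hm (hinj _ ⟨p, mem_nonZeroDivisors_of_ne_zero hp, rfl⟩ m
        ((Submodule.mem_annihilator_span_singleton _ _).1 hmem))
  · intro _ hpure
    obtain ⟨w, hw⟩ := exists_linear_noether _ hcd
    have hass : ∀ m : M, m ≠ 0 → ∀ p,
        MvPolynomial.aeval (fun i => linForm k (w i)) p ∈
          (Submodule.span (MvPolynomial (Fin n) k) {m}).annihilator → p = 0 := fun m hm =>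
      injective_of_dim_eq (hann m) (hpure m hm) _ hw
    obtain ⟨m₀, hm₀⟩ := exists_ne (0 : M)
    have hli : LinearIndependent k w := linearIndependent_of_aeval_linForm_injective w
      fun p hp => hass m₀ hm₀ p (hp ▸ Ideal.zero_mem _)
    obtain ⟨g, hg, hgw⟩ := exists_matrix_extending (Nat.sub_le n r) w hli
    refine ⟨g, hg, ?_⟩
    rw [injective_mkLinearMap_iff]
    rintro _ ⟨_, ⟨p, hp, rfl⟩, rfl⟩ m hm
    by_contra hm0
    refine nonZeroDivisors.ne_zero hp (hass m hm0 p ?_)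
    rw [Submodule.mem_annihilator_span_singleton]
    convert hm using 2
    change _ = MvPolynomial.aeval _ (MvPolynomial.rename _ p)
    rw [MvPolynomial.aeval_rename]
    congr 2
    funext i
    simp only [Function.comp_apply, hgw, linForm]
end
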